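/- Let X = Spec(B) be given by a local presentation attached to the multiplicity as in the context, with elimination algebra G_X^{(d)} over S and closed point ξ. Then for every field extension K of k and every arc φ : B → K[[t]] in X through ξ (with all φ(θ_i) and φ(z_j) nonzero), one has r_{X,φ}/ord(φ) ≥ ord(G_X^{(d)}). -/

import Mathlib

/-!
Let `r = ord G_X^{(d)}` and `N = ord φ`. Since `φ` maps `m` into `(t)^N`, every `g W^l` in the
elimination algebra satisfies `ord φ(g) ≥ r N l`: the image of the algebra has slope at least `r N`.
The coefficients of the minimal polynomial `f_i` are among these `g`, so the Newton polygon of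
`φ(f_i)` has slopes at least `r N`, and its root `φ(θ_i)` has order at least `r N`. Thus all
generators of the contact algebra lie in the subalgebra of slope at least `r N`, i.e.
`r_{X,φ} ≥ r N`.
-/

open Polynomial
open scoped ENNReal

noncomputable section

namespace NashMult

/-- The `m`-adic order `ν(f)` of an element `f` of a ring: the largest `n` with `f ∈ m ^ n`. -/
def adicOrder {R : Type*} [CommRing R] (m : Ideal R) (f : R) : ℕ :=
  sSup {n : ℕ | f ∈ m ^ n}

/-- A subalgebra `G ⊆ R[W]` is *graded* if it is spanned by its "monomials", i.e. it is closed
under taking homogeneous components.  This is the condition expressing that `G = ⊕ I_l W^l`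
for a family of ideals `I_l` (with `I_0 = R` and `I_i · I_j ⊆ I_{i+j}` automatic). -/
def Graded {R : Type*} [CommRing R] (G : Subalgebra R (Polynomial R)) : Prop :=
  ∀ p ∈ G, ∀ n : ℕ, (C (p.coeff n) * X ^ n : Polynomial R) ∈ G

/-- A *Rees algebra* over `R`: a finitely generated graded subalgebra of `R[W]`. -/
def IsReesAlgebra {R : Type*} [CommRing R] (G : Subalgebra R (Polynomial R)) : Prop :=
  G.FG ∧ Graded G

/-- The order of (the Rees algebra) `G` at the closed point of the local ring `(R, m)`:
`ord(G) = inf { ν(f)/n : f W^n a homogeneous element of G, n ≥ 1, f ≠ 0 }`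
(with value `∞` for the empty infimum). -/
def reesOrder {R : Type*} [CommRing R] (m : Ideal R) (G : Subalgebra R (Polynomial R)) : ℝ≥0∞ :=
  sInf {q : ℝ≥0∞ | ∃ (f : R) (n : ℕ), f ≠ 0 ∧ 1 ≤ n ∧ (C f * X ^ n : Polynomial R) ∈ G ∧
    q = (adicOrder m f : ℝ≥0∞) / (n : ℝ≥0∞)}

/-- `G = ⊕ I_l W^l` is *differentially closed* relative to a family `D` of derivations if
`I_{l+1} ⊆ I_l` and `D_j (I_l) ⊆ I_{l-1}` for all `l ≥ 1` and all `j`. -/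
def DiffClosed {k R ι : Type*} [CommRing k] [CommRing R] [Algebra k R]
    (D : ι → Derivation k R R) (G : Subalgebra R (Polynomial R)) : Prop :=
  (∀ (f : R) (l : ℕ), 1 ≤ l → (C f * X ^ (l + 1) : Polynomial R) ∈ G →
      (C f * X ^ l : Polynomial R) ∈ G) ∧
  (∀ (f : R) (l : ℕ) (j : ι), (C f * X ^ (l + 1) : Polynomial R) ∈ G →
      (C (D j f) * X ^ l : Polynomial R) ∈ G)

/-- `Diff(M)`: the smallest graded differentially closed subalgebra of `R[W]` containing the
set `M`. -/
def diffClosure {k R ι : Type*} [CommRing k] [CommRing R] [Algebra k R]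
    (D : ι → Derivation k R R) (M : Set (Polynomial R)) : Subalgebra R (Polynomial R) :=
  sInf {G : Subalgebra R (Polynomial R) | M ⊆ ↑G ∧ Graded G ∧ DiffClosed D G}

/-- The image `ψ(G)` of a Rees algebra `G` over `R` under a homomorphism (arc) `ψ : R → K⟦t⟧`:
the Rees algebra over `K⟦t⟧` generated by all `ψ(g) W^l` for `g W^l` a homogeneous element of
`G` with `ψ(g) ≠ 0`. -/
def arcImage {R A : Type*} [CommRing R] [CommRing A] (ψ : R → A)
    (G : Subalgebra R (Polynomial R)) : Subalgebra A (Polynomial A) :=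
  Algebra.adjoin A {p : Polynomial A | ∃ (g : R) (l : ℕ),
    (C g * X ^ l : Polynomial R) ∈ G ∧ ψ g ≠ 0 ∧ p = C (ψ g) * X ^ l}

/-- The order `ord(ψ)` of an arc `ψ : R → K⟦t⟧`: the largest `n` such that
`ψ(m) ⊆ t^n` (`t` being the ideal `tI`). -/
def homOrd {R A : Type*} [CommRing R] [CommRing A] (m : Ideal R) (tI : Ideal A)
    (ψ : R → A) : ℕ :=
  sSup {n : ℕ | ∀ s ∈ m, ψ s ∈ tI ^ n}

/-- The maximal ideal `(t)` of `K⟦t⟧`. -/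
def tId (K : Type*) [CommRing K] : Ideal (PowerSeries K) :=
  Ideal.span {(PowerSeries.X : PowerSeries K)}

/-- The `t`-adic order on `K⟦t⟧`. -/
def tOrd {K : Type*} [CommRing K] (g : PowerSeries K) : ℕ :=
  adicOrder (tId K) g

/-- The family of ideals `I_l` of the graded algebra `G = ⊕ I_l W^l`. -/
def idealFam {R : Type*} [CommRing R] (G : Subalgebra R (Polynomial R)) (l : ℕ) : Ideal R :=
  Submodule.comap (Polynomial.monomial l : R →ₗ[R] Polynomial R) (Subalgebra.toSubmodule G)

/-- The closed point of the local ring `(R, m)` belongs to the singular locus of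
`G = ⊕ I_l W^l`, i.e. `ν(I_l) ≥ l` for all `l ≥ 1`. -/
def SingFam {R : Type*} [CommRing R] (m : Ideal R) (I : ℕ → Ideal R) : Prop :=
  ∀ l : ℕ, 1 ≤ l → I l ≤ m ^ l

/-- The transform `⊕ (I_l · T^{-l}) W^l` of a Rees algebra `⊕ I_l W^l` over a DVR with
uniformizer `T` (when the closed point lies in the singular locus, `I_l ⊆ (T^l)` and
`I_l · T^{-l} = (I_l : (T^l))`). -/
def transformFam {R : Type*} [CommRing R] (T : R) (I : ℕ → Ideal R) : ℕ → Ideal R :=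
  fun l => (I l).colon (Ideal.span {T ^ l})

/-- The persistance: the least number `κ` of transforms needed so that the closed point no
longer lies in the singular locus. -/
def persist {R : Type*} [CommRing R] (m : Ideal R) (T : R)
    (G : Subalgebra R (Polynomial R)) : ℕ :=
  sInf {κ : ℕ | ¬ SingFam m ((transformFam T)^[κ] (idealFam G))}

/-- The set of elements of a ring integral over a subset `s` (monic equation with
coefficients in `s`). -/
def intClos {A : Type*} [CommRing A] (s : Set A) : Set A :=
  {p : A | ∃ q : Polynomial A, q.Monic ∧ (∀ n, q.coeff n ∈ s) ∧ Polynomial.eval p q = 0}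


/-- The monic polynomial `f = x^b + B_{b-2} x^{b-2} + ⋯ + B_1 x + B_0` with coefficients
`B_j = Bc j` (only `j ≤ b - 2` is relevant). -/
def minPolyOf {S : Type*} [CommRing S] (b : ℕ) (Bc : ℕ → S) : Polynomial S :=
  Polynomial.X ^ b + ∑ j ∈ Finset.range (b - 1), Polynomial.C (Bc j) * Polynomial.X ^ j


/-- The maximal ideal `(z_1, …, z_d)` of the polynomial ring `k[z_1, …, z_d]`
(the kernel of evaluation at the origin). -/
def mPoly (k : Type) [Field k] (d : ℕ) : Ideal (MvPolynomial (Fin d) k) :=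
  RingHom.ker (MvPolynomial.aeval (fun _ => (0 : k)) : MvPolynomial (Fin d) k →ₐ[k] k)

instance {k : Type} [Field k] {d : ℕ} : (mPoly k d).IsMaximal :=
  RingHom.ker_isMaximal_of_surjective _ (fun a => ⟨MvPolynomial.C a, by simp⟩)

instance {k : Type} [Field k] {d : ℕ} : (mPoly k d).IsPrime :=
  (inferInstance : (mPoly k d).IsMaximal).isPrime

/-- `IsSLoc k d S` says that `S` is (identified with) the localization of `k[z_1, …, z_d]`
at the maximal ideal `(z_1, …, z_d)`. -/
abbrev IsSLoc (k : Type) [Field k] (d : ℕ) (S : Type) [CommRing S]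
    [Algebra (MvPolynomial (Fin d) k) S] : Prop :=
  IsLocalization.AtPrime S (mPoly k d)

/-- The element `z_j` of `S`. -/
def zvar (k : Type) [Field k] (d : ℕ) (S : Type) [CommRing S]
    [Algebra (MvPolynomial (Fin d) k) S] (j : Fin d) : S :=
  algebraMap (MvPolynomial (Fin d) k) S (MvPolynomial.X j)

/-- The maximal ideal `m = (z_1, …, z_d)` of the local ring `S`. -/
def mS (k : Type) [Field k] (d : ℕ) (S : Type) [CommRing S]
    [Algebra (MvPolynomial (Fin d) k) S] : Ideal S :=
  (mPoly k d).map (algebraMap (MvPolynomial (Fin d) k) S)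


variable (k : Type) [Field k] (d : ℕ)
variable (S : Type) [CommRing S] [Algebra (MvPolynomial (Fin d) k) S] [Algebra k S]

/-- A local presentation, attached to the multiplicity, of a `d`-dimensional variety
`X = Spec B` at the closed point `ξ`:  `B = S[x_1,…,x_{n-d}]/I` with `I` prime,
`S → B` injective and finite, and the minimal polynomial over `Frac S` of the class `θ_i`
of `x_i` is `f_i = x_i^{b_i} + B_{i,b_i-2} x_i^{b_i-2} + ⋯ + B_{i,0}` with `b_i ≥ 2`,
`B_{i,j} ∈ m^{b_i - j}`, and some `B_{i,j} ≠ 0`. -/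
structure Presentation [IsDomain S] : Type 1 where
  /-- the number `n - d ≥ 1` of extra variables `x_i` -/
  e : ℕ
  he : 1 ≤ e
  /-- the prime ideal `I ⊆ S[x_1,…,x_{n-d}]` defining `X` -/
  I : Ideal (MvPolynomial (Fin e) S)
  hprime : I.IsPrime
  hinj : Function.Injective (algebraMap S (MvPolynomial (Fin e) S ⧸ I))
  hfinite : Module.Finite S (MvPolynomial (Fin e) S ⧸ I)
  /-- the degrees `b_i ≥ 2` -/
  b : Fin e → ℕ
  hb : ∀ i, 2 ≤ b i
  /-- the coefficients `B_{i,j}` (only `j ≤ b_i - 2` is relevant) -/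
  Bc : Fin e → ℕ → S
  /-- `f_i(θ_i) = 0` -/
  hroot : ∀ i, Polynomial.aeval (Ideal.Quotient.mk I (MvPolynomial.X i))
    (minPolyOf (b i) (Bc i)) = 0
  /-- `f_i` is irreducible over `Frac S`, i.e. it is the minimal polynomial of `θ_i` -/
  hirr : ∀ i, Irreducible ((minPolyOf (b i) (Bc i)).map (algebraMap S (FractionRing S)))
  /-- `B_{i,j} ∈ m^{b_i - j}` -/
  hmem : ∀ i, ∀ j ≤ b i - 2, Bc i j ∈ (mS k d S) ^ (b i - j)
  /-- some `B_{i,j} ≠ 0` -/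
  hnz : ∃ i, ∃ j ≤ b i - 2, Bc i j ≠ 0

variable [IsDomain S]
variable {k d S}

/-- The coordinate ring `B = S[x_1,…,x_{n-d}]/I` of `X`. -/
abbrev BRing (P : Presentation k d S) : Type :=
  MvPolynomial (Fin P.e) S ⧸ P.I

/-- The class `θ_i` of `x_i` in `B`. -/
def theta (P : Presentation k d S) (i : Fin P.e) : BRing P :=
  Ideal.Quotient.mk P.I (MvPolynomial.X i)

/-- The elimination algebra in dimension `d`:
`G_X^{(d)} = Diff( S[ B_{i,j} W^{b_i - j} : i, j ] )`, a Rees algebra over `S`. -/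
def elimAlg (P : Presentation k d S) (D : Fin d → Derivation k S S) :
    Subalgebra S (Polynomial S) :=
  diffClosure D {p : Polynomial S | ∃ i, ∃ j ≤ P.b i - 2,
    p = Polynomial.C (P.Bc i j) * Polynomial.X ^ (P.b i - j)}

/-- An arc in `X` through `ξ` (with the required nonvanishing): a `k`-algebra homomorphism
`φ : B → K⟦t⟧` sending the maximal ideal of `B` at `ξ` into `(t)`, with all `φ(θ_i)` and
`φ(z_j)` nonzero. -/
def IsArc (P : Presentation k d S) {K : Type} [Field K] [Algebra k K]
    (φ : BRing P →ₐ[k] PowerSeries K) : Prop :=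
  (∀ s ∈ mS k d S, φ (algebraMap S (BRing P) s) ∈ tId K) ∧
  (∀ i, φ (theta P i) ∈ tId K) ∧
  (∀ i, φ (theta P i) ≠ 0) ∧
  (∀ j, φ (algebraMap S (BRing P) (zvar k d S j)) ≠ 0)

/-- The order of an arc: the minimum of the `t`-adic orders of the `φ(θ_i)` and the
`φ(z_j)`. -/
def arcOrd (P : Presentation k d S) {K : Type} [Field K] [Algebra k K]
    (φ : BRing P →ₐ[k] PowerSeries K) : ℕ :=
  sInf ((Set.range fun i => tOrd (φ (theta P i))) ∪
    (Set.range fun j => tOrd (φ (algebraMap S (BRing P) (zvar k d S j)))))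

/-- The contact algebra `G^{(1)}_{X_0,φ}`: the Rees algebra over `K⟦t⟧` generated by the
`φ(θ_i) W` together with all `φ(g) W^l` for `g W^l` a homogeneous element of `G_X^{(d)}`
with `φ(g) ≠ 0`. -/
def contactAlg (P : Presentation k d S) (D : Fin d → Derivation k S S)
    {K : Type} [Field K] [Algebra k K] (φ : BRing P →ₐ[k] PowerSeries K) :
    Subalgebra (PowerSeries K) (Polynomial (PowerSeries K)) :=
  Algebra.adjoin (PowerSeries K)
    ((Set.range fun i => (Polynomial.C (φ (theta P i)) * Polynomial.X :
        Polynomial (PowerSeries K))) ∪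
      {p : Polynomial (PowerSeries K) | ∃ (g : S) (l : ℕ),
        (Polynomial.C g * Polynomial.X ^ l : Polynomial S) ∈ elimAlg P D ∧
        φ (algebraMap S (BRing P) g) ≠ 0 ∧
        p = Polynomial.C (φ (algebraMap S (BRing P) g)) * Polynomial.X ^ l})

/-- The order of contact `r_{X,φ}` of the arc `φ` with `Max mult(X)`: the order of the
contact algebra at the closed point of `K⟦t⟧`. -/
def rOrd (P : Presentation k d S) (D : Fin d → Derivation k S S)
    {K : Type} [Field K] [Algebra k K] (φ : BRing P →ₐ[k] PowerSeries K) : ℝ≥0∞ :=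
  reesOrder (tId K) (contactAlg P D φ)

/-- The persistance `ρ_{X,φ}`: the least number of transforms of the contact algebra
(i.e. of point blow-ups directed by `φ`) needed to make the closed point leave the
singular locus, that is, to lower the Nash multiplicity. -/
def rho (P : Presentation k d S) (D : Fin d → Derivation k S S)
    {K : Type} [Field K] [Algebra k K] (φ : BRing P →ₐ[k] PowerSeries K) : ℕ :=
  persist (tId K) (PowerSeries.X : PowerSeries K) (contactAlg P D φ)


section Valuation

variable {A : Type*} [CommRing A] (v : AddValuation A ℝ≥0∞)

/-- The subalgebra of polynomials `∑ aₙ Wⁿ` with `c * n ≤ v aₙ` for all `n`: the largest graded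
subalgebra of `A[W]` whose order with respect to `v` is at least `c`. -/
def slopeSubalgebra (c : ℝ≥0∞) : Subalgebra A A[X] where
  carrier := {p | ∀ n : ℕ, c * n ≤ v (p.coeff n)}
  add_mem' hp hq n := by
    rw [coeff_add]
    exact v.map_le_add (hp n) (hq n)
  mul_mem' {p q} hp hq n := by
    rw [coeff_mul]
    refine v.map_le_sum fun ij hij => ?_
    rw [v.map_mul, ← Finset.HasAntidiagonal.mem_antidiagonal.mp hij, Nat.cast_add, mul_add]
    exact add_le_add (hp ij.1) (hq ij.2)
  algebraMap_mem' a n := by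
    rcases eq_or_ne n 0 with rfl | hn
    · simp
    · simp [algebraMap_eq, coeff_C_of_ne_zero hn]

variable {v} {c : ℝ≥0∞}

theorem C_mul_X_pow_mem_slopeSubalgebra {a : A} {n : ℕ} :
    C a * X ^ n ∈ slopeSubalgebra v c ↔ c * n ≤ v a := by
  refine ⟨fun h => by simpa using h n, fun h l => ?_⟩
  rw [coeff_C_mul_X_pow]
  split_ifs with hl
  · rwa [hl]
  · simp

/-- A root of valuation `u < c` would make `θ ^ b` the unique term of least valuation. -/
theorem le_map_of_isRoot_of_monic {q : A[X]} (hq : q.Monic) {θ : A} (hθ : q.IsRoot θ)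
    (hcoeff : ∀ j < q.natDegree, c * (q.natDegree - j : ℕ) ≤ v (q.coeff j)) : c ≤ v θ := by
  by_contra! hlt
  set b := q.natDegree
  have hpow_ne_top (n : ℕ) : v (θ ^ n) ≠ ⊤ := by
    rw [v.map_pow, nsmul_eq_mul]
    exact ENNReal.mul_ne_top (ENNReal.natCast_ne_top n) hlt.ne_top
  have hterm : ∀ j ∈ Finset.range b, v (θ ^ b) < v (q.coeff j * θ ^ j) := by
    intro j hj
    rw [Finset.mem_range] at hj
    have hbj : ((b - j : ℕ) : ℝ≥0∞) ≠ 0 := by exact_mod_cast (Nat.sub_pos_of_lt hj).ne'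
    have hslope : v θ * (b - j : ℕ) < v (q.coeff j) :=
      (ENNReal.mul_lt_mul_left hbj (ENNReal.natCast_ne_top _) hlt).trans_le (hcoeff j hj)
    calc v (θ ^ b) = v θ * (b - j : ℕ) + v (θ ^ j) := by
          rw [v.map_pow, v.map_pow, nsmul_eq_mul, nsmul_eq_mul, mul_comm (v θ), ← add_mul,
            ← Nat.cast_add, Nat.sub_add_cancel hj.le]
      _ < v (q.coeff j) + v (θ ^ j) := ENNReal.add_lt_add_right (hpow_ne_top j) hslope
      _ = v (q.coeff j * θ ^ j) := (v.map_mul _ _).symm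
  have hroot : θ ^ b + ∑ j ∈ Finset.range b, q.coeff j * θ ^ j = 0 := by
    have h := hθ.eq_zero
    rw [hq.as_sum] at h
    simpa [eval_finsetSum] using h
  have hsum := v.map_lt_sum (hpow_ne_top b) hterm
  rw [eq_neg_of_add_eq_zero_right hroot, v.map_neg] at hsum
  exact hsum.false

end Valuation

section ReesOrder

variable {R : Type*} [CommRing R] {m : Ideal R} {G : Subalgebra R R[X]}

theorem mem_pow_adicOrder (m : Ideal R) (f : R) : f ∈ m ^ adicOrder m f := by
  by_cases h : BddAbove {n : ℕ | f ∈ m ^ n}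
  · exact Nat.sSup_mem (s := {n : ℕ | f ∈ m ^ n}) ⟨0, by simp⟩ h
  · simp [adicOrder, Nat.sSup_of_not_bddAbove h]

theorem adicOrder_span_singleton {t f : R} (hf : FiniteMultiplicity t f) :
    adicOrder (Ideal.span {t}) f = multiplicity t f := by
  have hpowers : {n : ℕ | f ∈ Ideal.span {t} ^ n} = Set.Iic (multiplicity t f) := by
    ext n
    simp [Ideal.span_singleton_pow, Ideal.mem_span_singleton, hf.pow_dvd_iff_le_multiplicity]
  rw [adicOrder, hpowers, csSup_Iic]

theorem adicOrder_span_singleton_pos {t f : R} (hf : FiniteMultiplicity t f)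
    (hmem : f ∈ Ideal.span {t}) : 0 < adicOrder (Ideal.span {t}) f := by
  rw [adicOrder_span_singleton hf]
  exact multiplicity_pos_of_dvd (Ideal.mem_span_singleton.mp hmem)

theorem le_reesOrder_iff {c : ℝ≥0∞} :
    c ≤ reesOrder m G ↔
      ∀ f : R, ∀ n : ℕ, f ≠ 0 → 1 ≤ n → C f * X ^ n ∈ G → c * n ≤ adicOrder m f := by
  have hdiv : ∀ f : R, ∀ n : ℕ, 1 ≤ n →
      (c ≤ (adicOrder m f : ℝ≥0∞) / n ↔ c * n ≤ adicOrder m f) := fun f n hn =>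
    ENNReal.le_div_iff_mul_le (.inl (by simpa using Nat.ne_of_gt hn))
      (.inl (ENNReal.natCast_ne_top n))
  refine le_sInf_iff.trans ⟨fun h f n hf hn hmem => ?_, ?_⟩
  · exact (hdiv f n hn).mp (h _ ⟨f, n, hf, hn, hmem, rfl⟩)
  · rintro h _ ⟨f, n, hf, hn, hmem, rfl⟩
    exact (hdiv f n hn).mpr (h f n hf hn hmem)

end ReesOrder

section PrimeElement

variable {A : Type*} [CommRing A] [IsDomain A] {t : A}

/-- The `t`-adic valuation of a prime element `t`, with values in `ℝ≥0∞` so that it can be compared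
with the rational slopes of Rees algebras. -/
def primeVal (ht : Prime t) : AddValuation A ℝ≥0∞ :=
  (multiplicity_addValuation ht).map ENat.toENNRealRingHom.toAddMonoidHom ENat.toENNReal_top
    ENat.toENNReal_mono

theorem natCast_le_primeVal {ht : Prime t} {f : A} {n : ℕ} :
    (n : ℝ≥0∞) ≤ primeVal ht f ↔ f ∈ Ideal.span {t} ^ n := by
  rw [Ideal.span_singleton_pow, Ideal.mem_span_singleton, pow_dvd_iff_le_emultiplicity,
    ← ENat.toENNReal_le, ENat.toENNReal_coe]
  rfl

theorem primeVal_eq_adicOrder [WfDvdMonoid A] (ht : Prime t) {f : A} (hf : f ≠ 0) :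
    primeVal ht f = adicOrder (Ideal.span {t}) f := by
  have hfin : FiniteMultiplicity t f := .of_not_isUnit ht.not_isUnit hf
  rw [adicOrder_span_singleton hfin, ← ENat.toENNReal_coe, ← hfin.emultiplicity_eq_multiplicity]
  rfl

theorem le_reesOrder_of_le_slopeSubalgebra [WfDvdMonoid A] (ht : Prime t) {c : ℝ≥0∞}
    {G : Subalgebra A A[X]} (hG : G ≤ slopeSubalgebra (primeVal ht) c) :
    c ≤ reesOrder (Ideal.span {t}) G :=
  le_reesOrder_iff.mpr fun f n hf _ hmem => by
    rw [← primeVal_eq_adicOrder ht hf]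
    exact C_mul_X_pow_mem_slopeSubalgebra.mp (hG hmem)

variable {R : Type*} [CommRing R] {m : Ideal R} {ψ : R →+* A} {N : ℕ}

theorem mul_adicOrder_le_primeVal_map (ht : Prime t) (hψ : m.map ψ ≤ Ideal.span {t} ^ N) (g : R) :
    (N : ℝ≥0∞) * adicOrder m g ≤ primeVal ht (ψ g) := by
  rw [← Nat.cast_mul, natCast_le_primeVal, pow_mul]
  refine Ideal.pow_right_mono hψ _ ?_
  rw [← Ideal.map_pow]
  exact Ideal.mem_map_of_mem ψ (mem_pow_adicOrder m g)

theorem reesOrder_mul_le_primeVal_map (ht : Prime t) (hψ : m.map ψ ≤ Ideal.span {t} ^ N)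
    {G : Subalgebra R R[X]} {g : R} {l : ℕ} (hg : C g * X ^ l ∈ G) :
    reesOrder m G * N * l ≤ primeVal ht (ψ g) := by
  rcases eq_or_ne g 0 with rfl | hg0
  · simp
  rcases Nat.eq_zero_or_pos l with rfl | hl
  · simp
  calc reesOrder m G * N * l = N * (reesOrder m G * l) := by ring
    _ ≤ N * adicOrder m g := by gcongr; exact le_reesOrder_iff.mp le_rfl g l hg0 hl hg
    _ ≤ primeVal ht (ψ g) := mul_adicOrder_le_primeVal_map ht hψ g

theorem arcImage_le_slopeSubalgebra (ht : Prime t) (hψ : m.map ψ ≤ Ideal.span {t} ^ N)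
    (G : Subalgebra R R[X]) :
    arcImage ψ G ≤ slopeSubalgebra (primeVal ht) (reesOrder m G * N) := by
  refine Algebra.adjoin_le ?_
  rintro _ ⟨g, l, hg, -, rfl⟩
  exact C_mul_X_pow_mem_slopeSubalgebra.mpr (reesOrder_mul_le_primeVal_map ht hψ hg)

theorem reesOrder_mul_le_primeVal_root (ht : Prime t) (hψ : m.map ψ ≤ Ideal.span {t} ^ N)
    {G : Subalgebra R R[X]} {f : R[X]} (hf : f.Monic)
    (hG : ∀ j < f.natDegree, C (f.coeff j) * X ^ (f.natDegree - j) ∈ G)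
    {θ : A} (hθ : f.eval₂ ψ θ = 0) : reesOrder m G * N ≤ primeVal ht θ := by
  refine le_map_of_isRoot_of_monic (hf.map ψ) (by rwa [IsRoot, eval_map]) fun j hj => ?_
  rw [hf.natDegree_map ψ] at hj ⊢
  rw [coeff_map]
  exact reesOrder_mul_le_primeVal_map ht hψ (hG j hj)

theorem normalized_contact_order_ge_elimination_order_general [WfDvdMonoid A] (ht : Prime t)
    (hN : 0 < N) (hψ : m.map ψ ≤ Ideal.span {t} ^ N) (G : Subalgebra R R[X])
    {ι : Type*} {f : ι → R[X]} (hf : ∀ i, (f i).Monic)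
    (hG : ∀ i, ∀ j < (f i).natDegree, C ((f i).coeff j) * X ^ ((f i).natDegree - j) ∈ G)
    {θ : ι → A} (hθ : ∀ i, (f i).eval₂ ψ (θ i) = 0) :
    reesOrder m G ≤
      reesOrder (Ideal.span {t})
        (Algebra.adjoin A (Set.range fun i => C (θ i) * X) ⊔ arcImage ψ G) / N := by
  rw [ENNReal.le_div_iff_mul_le (.inl (by simpa using hN.ne')) (.inl (ENNReal.natCast_ne_top N))]
  refine le_reesOrder_of_le_slopeSubalgebra ht
    (sup_le (Algebra.adjoin_le ?_) (arcImage_le_slopeSubalgebra ht hψ G))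
  rintro _ ⟨i, rfl⟩
  rw [SetLike.mem_coe, ← pow_one X, C_mul_X_pow_mem_slopeSubalgebra, Nat.cast_one, mul_one]
  exact reesOrder_mul_le_primeVal_root ht hψ (hf i) (hG i) (hθ i)

end PrimeElement

section MinPolyOf

variable {R : Type*} [CommRing R] (b : ℕ) (B : ℕ → R)

theorem degree_sum_range_C_mul_X_pow_lt {n : ℕ} (h : n ≤ b) :
    (∑ j ∈ Finset.range n, C (B j) * X ^ j).degree < (b : WithBot ℕ) := by
  rw [Finset.sum_range]
  exact (degree_sum_fin_lt _).trans_le (by exact_mod_cast h)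

theorem monic_minPolyOf : (minPolyOf b B).Monic :=
  monic_X_pow_add (degree_sum_range_C_mul_X_pow_lt b B b.pred_le)

theorem natDegree_minPolyOf [Nontrivial R] : (minPolyOf b B).natDegree = b := by
  rw [minPolyOf, natDegree_add_eq_left_of_degree_lt, natDegree_X_pow]
  rw [degree_X_pow]
  exact degree_sum_range_C_mul_X_pow_lt b B b.pred_le

theorem coeff_minPolyOf {j : ℕ} (hj : j < b) :
    (minPolyOf b B).coeff j = if j < b - 1 then B j else 0 := by
  simp [minPolyOf, coeff_X_pow, hj.ne]

end MinPolyOf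

theorem subset_diffClosure {k R ι : Type*} [CommRing k] [CommRing R] [Algebra k R]
    (D : ι → Derivation k R R) (M : Set R[X]) : M ⊆ diffClosure D M := by
  rw [diffClosure, Algebra.coe_sInf]
  exact Set.subset_iInter₂ fun _ hG => hG.1

theorem mPoly_eq_idealOfVars (k : Type) [Field k] (d : ℕ) :
    mPoly k d = MvPolynomial.idealOfVars (Fin d) k := by
  ext p
  rw [← pow_one (MvPolynomial.idealOfVars _ _), MvPolynomial.mem_pow_idealOfVars_iff']
  simp [mPoly, Finsupp.degree_eq_zero_iff, MvPolynomial.constantCoeff_eq]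

theorem mS_eq_span_zvar (k : Type) [Field k] (d : ℕ) (S : Type) [CommRing S]
    [Algebra (MvPolynomial (Fin d) k) S] : mS k d S = Ideal.span (Set.range (zvar k d S)) := by
  rw [mS, mPoly_eq_idealOfVars, Ideal.map_span, ← Set.range_comp]
  rfl

section Arc

variable {k : Type} [Field k] {d : ℕ} {S : Type} [CommRing S] [IsDomain S]
  [Algebra (MvPolynomial (Fin d) k) S] [Algebra k S] (P : Presentation k d S)

theorem coeff_minPolyOf_mem_elimAlg (D : Fin d → Derivation k S S) (i : Fin P.e) {j : ℕ}
    (hj : j < P.b i) :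
    C ((minPolyOf (P.b i) (P.Bc i)).coeff j) * X ^ (P.b i - j) ∈ elimAlg P D := by
  rw [coeff_minPolyOf _ _ hj]
  split_ifs with hj'
  · exact subset_diffClosure D _ ⟨i, j, by lia, rfl⟩
  · simp

variable {K : Type} [Field K] [Algebra k K] (φ : BRing P →ₐ[k] PowerSeries K)

/-- The arc in `Spec S` below the arc `φ` in `X`. -/
def baseArc : S →+* PowerSeries K :=
  (φ : BRing P →+* PowerSeries K).comp (algebraMap S (BRing P))

theorem eval₂_baseArc_minPolyOf (i : Fin P.e) :
    (minPolyOf (P.b i) (P.Bc i)).eval₂ (baseArc P φ) (φ (theta P i)) = 0 := by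
  have hroot := congrArg φ (P.hroot i)
  rw [map_zero, aeval_def] at hroot
  rw [← hroot]
  exact (hom_eval₂ _ _ (φ : BRing P →+* PowerSeries K) _).symm

theorem map_baseArc_mS_le : (mS k d S).map (baseArc P φ) ≤ tId K ^ arcOrd P φ := by
  rw [mS_eq_span_zvar, Ideal.map_le_iff_le_comap, Ideal.span_le]
  rintro _ ⟨j, rfl⟩
  exact Ideal.pow_le_pow_right (Nat.sInf_le (.inr ⟨j, rfl⟩)) (mem_pow_adicOrder (tId K) _)

theorem contactAlg_eq_sup (D : Fin d → Derivation k S S) :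
    contactAlg P D φ =
      Algebra.adjoin (PowerSeries K) (Set.range fun i => C (φ (theta P i)) * X) ⊔
        arcImage (baseArc P φ) (elimAlg P D) :=
  Algebra.adjoin_union _ _

variable {P φ}

theorem arcOrd_pos (hφ : IsArc P φ) : 0 < arcOrd P φ := by
  obtain ⟨hm, hθ_mem, hθ_ne, hz_ne⟩ := hφ
  have hz_mem : ∀ j, zvar k d S j ∈ mS k d S := fun j =>
    mS_eq_span_zvar k d S ▸ Ideal.subset_span ⟨j, rfl⟩
  have htOrd_pos : ∀ f : PowerSeries K, f ∈ tId K → f ≠ 0 → 0 < tOrd f := fun f hmem hf =>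
    adicOrder_span_singleton_pos (.of_not_isUnit PowerSeries.X_prime.not_isUnit hf) hmem
  rcases Nat.sInf_mem (⟨_, .inl ⟨⟨0, P.he⟩, rfl⟩⟩ :
    ((Set.range fun i => tOrd (φ (theta P i))) ∪
      Set.range fun j => tOrd (φ (algebraMap S (BRing P) (zvar k d S j)))).Nonempty)
    with ⟨i, hi⟩ | ⟨j, hj⟩
  · exact (htOrd_pos _ (hθ_mem i) (hθ_ne i)).trans_eq hi
  · exact (htOrd_pos _ (hm _ (hz_mem j)) (hz_ne j)).trans_eq hj

end Arc

/-- (Theorem `thm:desigualdad_gral`.)  For every field extension `K ⊇ k` and every arc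
`φ : B → K⟦t⟧` in `X` through `ξ`, one has `r_{X,φ} / ord(φ) ≥ ord(G_X^{(d)})`. -/
theorem normalized_contact_order_ge_elimination_order
    (k : Type) [Field k] [CharZero k] (d : ℕ) (hd : 1 ≤ d)
    (S : Type) [CommRing S] [IsDomain S] [Algebra (MvPolynomial (Fin d) k) S]
    [Algebra k S] [IsScalarTower k (MvPolynomial (Fin d) k) S] [IsSLoc k d S]
    (D : Fin d → Derivation k S S)
    (hD : ∀ i j : Fin d, D j (zvar k d S i) = if i = j then 1 else 0)
    (P : Presentation k d S)
    (K : Type) [Field K] [Algebra k K]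
    (φ : BRing P →ₐ[k] PowerSeries K) (hφ : IsArc P φ) :
    reesOrder (mS k d S) (elimAlg P D) ≤ rOrd P D φ / (arcOrd P φ : ℝ≥0∞) := by
  rw [rOrd, contactAlg_eq_sup]
  refine normalized_contact_order_ge_elimination_order_general PowerSeries.X_prime (arcOrd_pos hφ)
    (map_baseArc_mS_le P φ) (elimAlg P D) (fun i => monic_minPolyOf (P.b i) (P.Bc i))
    (fun i j hj => ?_) (eval₂_baseArc_minPolyOf P φ)
  rw [natDegree_minPolyOf] at hj ⊢
  exact coeff_minPolyOf_mem_elimAlg P D i hj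

end NashMult
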